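/- Let M and N be transitive models of ZFC⁻ and let π : M → N be elementary. Suppose α is an ordinal of M such that sup π"α = α and π is continuous at cof^M(α). Then π(α) = α. -/

import Mathlib

/- ## A framework for transitive class/set models of fragments of ZFC,
     inside the universe `ZFSet` of ZF sets. -/

open FirstOrder FirstOrder.Language

/-- The language of set theory: a single binary relation symbol `∈`. -/
inductive SetMemRel : ℕ → Type
  | mem : SetMemRel 2

/-- The first-order language of set theory. -/
def setL : FirstOrder.Language := ⟨fun _ => Empty, SetMemRel⟩

/-- Evaluation of a term of the language of set theory (terms are just variables). -/
def tval {n : ℕ} (v : Fin n → ZFSet) : setL.Term (Empty ⊕ Fin n) → ZFSet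
  | .var (Sum.inl e) => e.elim
  | .var (Sum.inr i) => v i
  | .func f _ => f.elim

/-- Tarskian satisfaction of a formula of the language of set theory in a class `S` of
ZF-sets (equipped with true membership), under the assignment `v`. -/
def ZSat (S : Set ZFSet) : ∀ {n : ℕ}, setL.BoundedFormula Empty n → (Fin n → ZFSet) → Prop
  | _, .falsum, _ => False
  | _, .equal t u, v => tval v t = tval v u
  | _, .rel R ts, v =>
      match R with
      | SetMemRel.mem => tval v (ts 0) ∈ tval v (ts 1)
  | _, .imp φ ψ, v => ZSat S φ v → ZSat S ψ v
  | _, .all φ, v => ∀ x ∈ S, ZSat S φ (Fin.snoc v x)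

/-- Satisfaction of a sentence in a class of ZF-sets. -/
def SatS (S : Set ZFSet) (σ : setL.Sentence) : Prop := ZSat S σ finZeroElim

/-- A class of ZF-sets is transitive. -/
def IsTransClass (S : Set ZFSet) : Prop := ∀ x ∈ S, ∀ y ∈ x, y ∈ S

/-- `r` is a well-ordering of the set `x`, from the point of view of the class `S`
(Kuratowski pairs code the relation; minimality is required for nonempty subsets of `x`
lying in `S`). -/
def WellOrders (S : Set ZFSet) (r x : ZFSet) : Prop :=
  (∀ a ∈ x, ZFSet.pair a a ∉ r) ∧
  (∀ a ∈ x, ∀ b ∈ x, ∀ c ∈ x, ZFSet.pair a b ∈ r → ZFSet.pair b c ∈ r → ZFSet.pair a c ∈ r) ∧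
  (∀ a ∈ x, ∀ b ∈ x, a ≠ b → (ZFSet.pair a b ∈ r ∨ ZFSet.pair b a ∈ r)) ∧
  (∀ y ∈ S, (∀ z ∈ y, z ∈ x) → y ≠ ∅ → ∃ m ∈ y, ∀ z ∈ y, ZFSet.pair z m ∉ r)

/-- `S` is a transitive model of ZFC⁻, i.e. of ZFC stated with the Replacement Scheme and
the Well-Ordering Theorem but without the Power Set Axiom.  (Extensionality and Foundation
are automatic for transitive classes of ZF-sets.) -/
def ModelsZFCminus (S : Set ZFSet) : Prop :=
  IsTransClass S ∧
  (∅ : ZFSet) ∈ S ∧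
  (∀ x ∈ S, ∀ y ∈ S, ({x, y} : ZFSet) ∈ S) ∧
  (∀ x ∈ S, (ZFSet.sUnion x : ZFSet) ∈ S) ∧
  ZFSet.omega ∈ S ∧
  (∀ (n : ℕ) (φ : setL.BoundedFormula Empty (n + 1)) (p : Fin n → ZFSet),
    (∀ i, p i ∈ S) → ∀ a ∈ S, ∃ b ∈ S, ∀ y, y ∈ b ↔ (y ∈ a ∧ ZSat S φ (Fin.snoc p y))) ∧
  (∀ (n : ℕ) (φ : setL.BoundedFormula Empty (n + 2)) (p : Fin n → ZFSet),
    (∀ i, p i ∈ S) → ∀ a ∈ S,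
      (∀ x ∈ a, ∃! y, y ∈ S ∧ ZSat S φ (Fin.snoc (Fin.snoc p x) y)) →
      ∃ b ∈ S, ∀ y, y ∈ b ↔ ∃ x ∈ a, y ∈ S ∧ ZSat S φ (Fin.snoc (Fin.snoc p x) y)) ∧
  (∀ x ∈ S, ∃ r ∈ S, WellOrders S r x)

/-- `S` is a transitive model of ZFC. -/
def ModelsZFC (S : Set ZFSet) : Prop :=
  ModelsZFCminus S ∧ ∀ x ∈ S, ∃ p ∈ S, ∀ y, y ∈ p ↔ (y ∈ S ∧ y ⊆ x)

/-- `f` is (the graph of) a surjection of `a` onto `b`. -/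
def SurjFun (f a b : ZFSet) : Prop :=
  ZFSet.IsFunc a b f ∧ ∀ y ∈ b, ∃ x ∈ a, ZFSet.pair x y ∈ f

/-- `f` is (the graph of) an injection of `a` into `b`. -/
def InjFun (f a b : ZFSet) : Prop :=
  ZFSet.IsFunc a b f ∧ ∀ x ∈ a, ∀ x' ∈ a, ∀ y, ZFSet.pair x y ∈ f → ZFSet.pair x' y ∈ f → x = x'

/-- `f` is (the graph of) a cofinal function from `β` into the ordinal `α`. -/
def CofinalFun (f β α : ZFSet) : Prop :=
  ZFSet.IsFunc β α f ∧ ∀ ξ ∈ α, ∃ η ∈ β, ∃ ζ, ZFSet.pair η ζ ∈ f ∧ (ξ ∈ ζ ∨ ξ = ζ)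

/-- `μ = cof(α)` as computed inside the class `S` (for `S = Set.univ`, the true cofinality). -/
def IsCofOf (S : Set ZFSet) (α μ : ZFSet) : Prop :=
  μ ∈ S ∧ μ.IsOrdinal ∧ (∃ f ∈ S, CofinalFun f μ α) ∧
  ∀ ν ∈ S, ZFSet.IsOrdinal ν → (∃ f ∈ S, CofinalFun f ν α) → μ ⊆ ν

/-- `κ` is a cardinal from the point of view of the class `S`
(for `S = Set.univ`, a true cardinal). -/
def IsCardIn (S : Set ZFSet) (κ : ZFSet) : Prop :=
  κ.IsOrdinal ∧ ∀ α ∈ κ, ∀ f ∈ S, ¬ SurjFun f α κ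

/-- `μ` is an (infinite) regular cardinal from the point of view of the class `S`. -/
def IsRegularIn (S : Set ZFSet) (μ : ZFSet) : Prop :=
  ZFSet.omega ⊆ μ ∧ IsCardIn S μ ∧ IsCofOf S μ μ

/-- `ν = μ⁺`, the cardinal successor of `μ`, as computed in the class `S`. -/
def CardSuccIn (S : Set ZFSet) (μ ν : ZFSet) : Prop :=
  ν ∈ S ∧ IsCardIn S ν ∧ μ ∈ ν ∧ ∀ ξ ∈ S, IsCardIn S ξ → μ ∈ ξ → ν ⊆ ξ

/-- `μ` is the largest cardinal of the model `S`. -/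
def IsLargestCardIn (S : Set ZFSet) (μ : ZFSet) : Prop :=
  μ ∈ S ∧ IsCardIn S μ ∧ ∀ x ∈ S, IsCardIn S x → x ⊆ μ

/-- `α = sup A`, for `A` a collection of ordinals: `α` is the least ordinal above all of them. -/
def IsSupOf (α : ZFSet) (A : Set ZFSet) : Prop :=
  α.IsOrdinal ∧ (∀ a ∈ A, a ⊆ α) ∧ ∀ β : ZFSet, β.IsOrdinal → (∀ a ∈ A, a ⊆ β) → α ⊆ β

/-- `π` is an elementary embedding (for the language of set theory) from the class `S`
into the class `T`. -/
def IsElem (S T : Set ZFSet) (π : ZFSet → ZFSet) : Prop :=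
  (∀ x ∈ S, π x ∈ T) ∧
  ∀ (n : ℕ) (φ : setL.BoundedFormula Empty n) (v : Fin n → ZFSet),
    (∀ i, v i ∈ S) → (ZSat S φ v ↔ ZSat T φ (fun i => π (v i)))

universe uu

/-- `P` is uniformly definable (by a formula absolute for transitive classes). -/
def FDef (n : ℕ) (P : (Fin n → ZFSet.{uu}) → Prop) : Prop :=
  ∃ φ : setL.BoundedFormula Empty n, ∀ S : Set ZFSet.{uu}, IsTransClass S →
    ∀ v : Fin n → ZFSet.{uu}, (∀ i, v i ∈ S) → (ZSat S φ v ↔ P v)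

/-- `t` is a projection. -/
def FVar {n : ℕ} (t : (Fin n → ZFSet.{uu}) → ZFSet.{uu}) : Prop := ∃ i, ∀ v, t v = v i

namespace FDef

variable {n : ℕ}

theorem congr {P Q : (Fin n → ZFSet.{uu}) → Prop} (h : FDef n P) (hPQ : ∀ v, P v ↔ Q v) :
    FDef n Q := by
  obtain ⟨φ, hφ⟩ := h
  exact ⟨φ, fun S hS v hv => (hφ S hS v hv).trans (hPQ v)⟩

theorem mem {t u : (Fin n → ZFSet.{uu}) → ZFSet.{uu}} (ht : FVar t) (hu : FVar u) :
    FDef n (fun v => t v ∈ u v) := by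
  obtain ⟨i, hi⟩ := ht
  obtain ⟨j, hj⟩ := hu
  refine ⟨.rel SetMemRel.mem ![.var (Sum.inr i), .var (Sum.inr j)], fun S _ v _ => ?_⟩
  change v i ∈ v j ↔ t v ∈ u v
  rw [hi, hj]

theorem eq {t u : (Fin n → ZFSet.{uu}) → ZFSet.{uu}} (ht : FVar t) (hu : FVar u) :
    FDef n (fun v => t v = u v) := by
  obtain ⟨i, hi⟩ := ht
  obtain ⟨j, hj⟩ := hu
  refine ⟨.equal (.var (Sum.inr i)) (.var (Sum.inr j)), fun S _ v _ => ?_⟩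
  change _ = _ ↔ t v = u v
  rw [hi, hj]
  simp [tval]

theorem imp {P Q : (Fin n → ZFSet.{uu}) → Prop} (hP : FDef n P) (hQ : FDef n Q) :
    FDef n (fun v => P v → Q v) := by
  obtain ⟨φ, hφ⟩ := hP
  obtain ⟨ψ, hψ⟩ := hQ
  refine ⟨.imp φ ψ, fun S hS v hv => ?_⟩
  simp only [ZSat]
  rw [hφ S hS v hv, hψ S hS v hv]

theorem not {P : (Fin n → ZFSet.{uu}) → Prop} (hP : FDef n P) : FDef n (fun v => ¬ P v) := by
  have : FDef n (fun _ : Fin n → ZFSet.{uu} => False) :=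
    ⟨.falsum, fun S _ v _ => by simp [ZSat]⟩
  exact (hP.imp this)

theorem and {P Q : (Fin n → ZFSet.{uu}) → Prop} (hP : FDef n P) (hQ : FDef n Q) :
    FDef n (fun v => P v ∧ Q v) :=
  (hP.imp hQ.not).not.congr (fun v => by tauto)

theorem or {P Q : (Fin n → ZFSet.{uu}) → Prop} (hP : FDef n P) (hQ : FDef n Q) :
    FDef n (fun v => P v ∨ Q v) :=
  (hP.not.imp hQ).congr (fun v => by tauto)

theorem ball {t : (Fin n → ZFSet.{uu}) → ZFSet.{uu}} (ht : FVar t)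
    {Q : (Fin n → ZFSet.{uu}) → ZFSet.{uu} → Prop}
    (hQ : FDef (n + 1) (fun w => Q (Fin.init w) (w (Fin.last n)))) :
    FDef n (fun v => ∀ x ∈ t v, Q v x) := by
  obtain ⟨i, hi⟩ := ht
  have hm : FDef (n + 1) (fun w : Fin (n+1) → ZFSet.{uu} => w (Fin.last n) ∈ w i.castSucc) :=
    mem ⟨_, fun _ => rfl⟩ ⟨_, fun _ => rfl⟩
  obtain ⟨φ, hφ⟩ := hm.imp hQ
  refine ⟨.all φ, fun S hS v hv => ?_⟩
  have key : ∀ x ∈ S, (ZSat S φ (Fin.snoc v x) ↔ (x ∈ v i → Q v x)) := by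
    intro x hx
    have hv' : ∀ j, (Fin.snoc v x : Fin (n+1) → ZFSet.{uu}) j ∈ S := by
      intro j
      refine Fin.lastCases ?_ (fun j => ?_) j
      · simpa using hx
      · simpa using hv j
    have := hφ S hS (Fin.snoc v x) hv'
    simpa using this
  simp only [ZSat]
  rw [hi]
  constructor
  · intro h x hx
    have hxS := hS _ (hv i) x hx
    exact (key x hxS).1 (h x hxS) hx
  · intro h x hx
    exact (key x hx).2 (h x)

theorem bex {t : (Fin n → ZFSet.{uu}) → ZFSet.{uu}} (ht : FVar t)
    {Q : (Fin n → ZFSet.{uu}) → ZFSet.{uu} → Prop}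
    (hQ : FDef (n + 1) (fun w => Q (Fin.init w) (w (Fin.last n)))) :
    FDef n (fun v => ∃ x ∈ t v, Q v x) :=
  (ball (Q := fun v x => ¬ Q v x) ht hQ.not).not.congr (fun v => by push Not; rfl)

theorem _root_.FVar.init {t : (Fin n → ZFSet.{uu}) → ZFSet.{uu}} (ht : FVar t) :
    FVar (fun w : Fin (n+1) → ZFSet.{uu} => t (Fin.init w)) := by
  obtain ⟨i, hi⟩ := ht
  exact ⟨i.castSucc, fun v => hi _⟩

theorem _root_.FVar.last :
    FVar (fun w : Fin (n+1) → ZFSet.{uu} => w (Fin.last n)) := ⟨_, fun _ => rfl⟩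

theorem _root_.FVar.proj (i : Fin n) :
    FVar (fun w : Fin n → ZFSet.{uu} => w i) := ⟨_, fun _ => rfl⟩

theorem upair {s t u : (Fin n → ZFSet.{uu}) → ZFSet.{uu}}
    (hs : FVar s) (ht : FVar t) (hu : FVar u) :
    FDef n (fun v => s v = {t v, u v}) := by
  refine (((mem ht hs).and (mem hu hs)).and
    (ball (Q := fun v x => x = t v ∨ x = u v) hs
      ((eq FVar.last ht.init).or (eq FVar.last hu.init)))).congr (fun v => ?_)
  constructor
  · rintro ⟨⟨h1, h2⟩, h3⟩
    ext x
    rw [ZFSet.mem_pair]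
    refine ⟨h3 x, ?_⟩
    rintro (rfl | rfl) <;> assumption
  · intro h
    rw [h]
    simp

theorem pair {s t u : (Fin n → ZFSet.{uu}) → ZFSet.{uu}}
    (hs : FVar s) (ht : FVar t) (hu : FVar u) :
    FDef n (fun v => s v = ZFSet.pair (t v) (u v)) := by
  refine (((bex (Q := fun v x => x = {t v, t v}) hs (upair FVar.last ht.init ht.init)).and
    (bex (Q := fun v x => x = {t v, u v}) hs (upair FVar.last ht.init hu.init))).and
    (ball (Q := fun v x => x = {t v, t v} ∨ x = {t v, u v}) hs
      ((upair FVar.last ht.init ht.init).or (upair FVar.last ht.init hu.init)))).congr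
      (fun v => ?_)
  simp only [ZFSet.pair_eq_singleton, ZFSet.pair]
  constructor
  · rintro ⟨⟨⟨_, h1, rfl⟩, ⟨_, h2, rfl⟩⟩, h3⟩
    ext x
    rw [ZFSet.mem_pair]
    refine ⟨h3 x, ?_⟩
    rintro (rfl | rfl) <;> assumption
  · intro h
    rw [h]
    simp

theorem pairMem {f t u : (Fin n → ZFSet.{uu}) → ZFSet.{uu}}
    (hf : FVar f) (ht : FVar t) (hu : FVar u) :
    FDef n (fun v => ZFSet.pair (t v) (u v) ∈ f v) :=
  (bex (Q := fun v x => x = ZFSet.pair (t v) (u v)) hf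
    (pair FVar.last ht.init hu.init)).congr (fun v => by simp)

theorem ordinal {t : (Fin n → ZFSet.{uu}) → ZFSet.{uu}} (ht : FVar t) :
    FDef n (fun v => (t v).IsOrdinal) := by
  refine ((ball (Q := fun v x => ∀ y ∈ x, y ∈ t v) ht
      (ball (Q := fun v y => y ∈ t (Fin.init v)) FVar.last (mem FVar.last ht.init.init))).and
    (ball (Q := fun v w => ∀ z ∈ w, ∀ y ∈ z, y ∈ w) ht
      (ball (Q := fun v z => ∀ y ∈ z, y ∈ v (Fin.last n)) FVar.last
        (ball (Q := fun v y => y ∈ (Fin.init v : Fin (n+1) → ZFSet.{uu}) (Fin.last n)) FVar.last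
          (mem FVar.last FVar.last.init.init))))).congr (fun v => ?_)
  constructor
  · rintro ⟨h1, h2⟩
    exact ⟨fun x hx y hy => h1 x hx y hy, fun {y z w} hy hz hw => h2 w hw z hz y hy⟩
  · intro h
    exact ⟨fun x hx y hy => h.isTransitive x hx hy, fun w hw z hz y hy => h.mem_trans' hy hz hw⟩

theorem transfer {P : (Fin n → ZFSet.{uu}) → Prop} (h : FDef n P) {S T : Set ZFSet.{uu}}
    (hS : IsTransClass S) (hT : IsTransClass T) {π : ZFSet.{uu} → ZFSet.{uu}} (hπ : IsElem S T π)
    (v : Fin n → ZFSet.{uu}) (hv : ∀ i, v i ∈ S) : P v ↔ P (fun i => π (v i)) := by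
  obtain ⟨φ, hφ⟩ := h
  rw [← hφ S hS v hv, hπ.2 n φ v hv, hφ T hT _ (fun i => hπ.1 _ (hv i))]

theorem sepIn {P : (Fin (n + 1) → ZFSet.{uu}) → Prop} (h : FDef (n + 1) P) {S : Set ZFSet.{uu}}
    (hS : ModelsZFCminus S) (p : Fin n → ZFSet.{uu}) (hp : ∀ i, p i ∈ S) {a : ZFSet.{uu}}
    (ha : a ∈ S) : ∃ b ∈ S, ∀ y, y ∈ b ↔ y ∈ a ∧ P (Fin.snoc p y) := by
  obtain ⟨φ, hφ⟩ := h
  obtain ⟨hT, -, -, -, -, hsep, -⟩ := hS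
  obtain ⟨b, hb, hb'⟩ := hsep n φ p hp a ha
  refine ⟨b, hb, fun y => (hb' y).trans (and_congr_right fun hy => hφ S hT _ fun j => ?_)⟩
  refine Fin.lastCases ?_ (fun j => ?_) j
  · simpa using hT a ha y hy
  · simpa using hp j

end FDef

theorem idIn {S : Set ZFSet.{uu}} (hS : ModelsZFCminus S) {a : ZFSet.{uu}} (ha : a ∈ S) :
    ∃ b ∈ S, ∀ y, y ∈ b ↔ ∃ x ∈ a, y = ZFSet.pair x x := by
  have hd : FDef 2 (fun v => v 1 = ZFSet.pair (v 0) (v 0)) :=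
    FDef.pair (FVar.proj 1) (FVar.proj 0) (FVar.proj 0)
  obtain ⟨φ, hφ⟩ := hd
  obtain ⟨hT, -, hpair, -, -, -, hrep, -⟩ := hS
  have key : ∀ x ∈ S, ∀ y ∈ S,
      (ZSat S φ (Fin.snoc (Fin.snoc (finZeroElim : Fin 0 → ZFSet.{uu}) x) y) ↔
        y = ZFSet.pair x x) := by
    intro x hx y hy
    refine (hφ S hT _ ?_).trans ?_
    · intro i
      fin_cases i
      · exact hx
      · exact hy
    · exact Iff.rfl
  have hpp : ∀ x ∈ S, ZFSet.pair x x ∈ S := by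
    intro x hx
    have h1 := hpair x hx x hx
    have h2 := hpair _ h1 _ h1
    simpa [ZFSet.pair] using h2
  obtain ⟨b, hb, hb'⟩ := hrep 0 φ finZeroElim (fun i => i.elim0) a ha (by
    intro x hx
    have hxS := hT a ha x hx
    refine ⟨ZFSet.pair x x, ⟨hpp x hxS, (key x hxS _ (hpp x hxS)).2 rfl⟩, ?_⟩
    rintro y ⟨hy, hy'⟩
    exact (key x hxS y hy).1 hy')
  refine ⟨b, hb, fun y => (hb' y).trans ?_⟩
  constructor
  · rintro ⟨x, hx, hy, h⟩
    exact ⟨x, hx, (key x (hT a ha x hx) y hy).1 h⟩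
  · rintro ⟨x, hx, rfl⟩
    have hxS := hT a ha x hx
    exact ⟨x, hx, hpp x hxS, (key x hxS _ (hpp x hxS)).2 rfl⟩

theorem existsCof {S : Set ZFSet.{uu}} (hS : ModelsZFCminus S) {α : ZFSet.{uu}} (hαS : α ∈ S)
    (hα : α.IsOrdinal) : ∃ γ, IsCofOf S α γ := by
  let A : Set ZFSet.{uu} := {ν | ν ∈ S ∧ ν.IsOrdinal ∧ ∃ f ∈ S, CofinalFun f ν α}
  have hne : A.Nonempty := by
    refine ⟨α, hαS, hα, ?_⟩
    obtain ⟨b, hb, hb'⟩ := idIn hS hαS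
    refine ⟨b, hb, ⟨?_, ?_⟩, ?_⟩
    · intro y hy
      obtain ⟨x, hx, rfl⟩ := (hb' y).1 hy
      exact ZFSet.pair_mem_prod.2 ⟨hx, hx⟩
    · intro z hz
      refine ⟨z, (hb' _).2 ⟨z, hz, rfl⟩, ?_⟩
      intro w hw
      obtain ⟨x, hx, h⟩ := (hb' _).1 hw
      rw [ZFSet.pair_inj] at h
      rw [h.1, h.2]
    · intro ξ hξ
      exact ⟨ξ, hξ, ξ, (hb' _).2 ⟨ξ, hξ, rfl⟩, Or.inr rfl⟩
  obtain ⟨γ, hγ, hmin⟩ := ZFSet.mem_wf.has_min A hne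
  refine ⟨γ, hγ.1, hγ.2.1, hγ.2.2, ?_⟩
  intro ν hν hνo hf
  exact (ZFSet.IsOrdinal.notMem_iff_subset hνo hγ.2.1).1 (hmin ν ⟨hν, hνo, hf⟩)

theorem bddBelow {S : Set ZFSet.{uu}} (hS : ModelsZFCminus S) {α γ f β : ZFSet.{uu}}
    (hα : α.IsOrdinal) (hαS : α ∈ S) (hγ : IsCofOf S α γ) (hfS : f ∈ S)
    (hf : CofinalFun f γ α) (hβ : β ∈ γ) :
    ∃ δ ∈ α, ∀ η ∈ β, ∀ ζ ∈ α, ZFSet.pair η ζ ∈ f → ζ ∈ δ := by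
  by_contra! hcon
  obtain ⟨hγS, hγo, -, hmin⟩ := hγ
  have hT := hS.1
  have hβS := hT _ hγS _ hβ
  have hαdef : FDef.{uu} 3 (fun v => ∃ η ∈ v 0, ∃ ζ ∈ v 1, v 2 = ZFSet.pair η ζ) := by
    refine FDef.bex (Q := fun v η => ∃ ζ ∈ v 1, v 2 = ZFSet.pair η ζ) (FVar.proj 0)
      (FDef.bex (Q := fun v ζ => v 2 = ZFSet.pair (v 3) ζ) (FVar.proj 1) ?_)
    exact FDef.pair (FVar.proj 2) (FVar.proj 3) (FVar.proj 4)
  obtain ⟨g, hgS, hg⟩ := hαdef.sepIn hS ![β, α] (by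
    intro i
    fin_cases i
    · exact hβS
    · exact hαS) hfS
  have hg' : ∀ y, y ∈ g ↔ y ∈ f ∧ ∃ η ∈ β, ∃ ζ ∈ α, y = ZFSet.pair η ζ := hg
  have hβγ : β ⊆ γ := hγo.subset_of_mem hβ
  have hsub := hmin β hβS (hγo.mem hβ) ⟨g, hgS, ⟨?_, ?_⟩, ?_⟩
  · exact ZFSet.mem_irrefl β (hsub hβ)
  · intro y hy
    obtain ⟨-, η, hη, ζ, hζ, rfl⟩ := (hg' y).1 hy
    exact ZFSet.pair_mem_prod.2 ⟨hη, hζ⟩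
  · intro z hz
    obtain ⟨w, hw, hu⟩ := hf.1.2 z (hβγ hz)
    have hwα := (ZFSet.pair_mem_prod.1 (hf.1.1 hw)).2
    refine ⟨w, (hg' _).2 ⟨hw, z, hz, w, hwα, rfl⟩, ?_⟩
    intro w' hw'
    exact hu w' ((hg' _).1 hw').1
  · intro ξ hξ
    obtain ⟨η, hη, ζ, hζ, hp, hn⟩ := hcon ξ hξ
    refine ⟨η, hη, ζ, (hg' _).2 ⟨hp, η, hη, ζ, hζ, rfl⟩, ?_⟩
    rcases hα.mem hξ |>.mem_trichotomous (hα.mem hζ) with h | h | h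
    · exact Or.inl h
    · exact Or.inr h
    · exact absurd h hn

/-- Let `M` and `N` be transitive models of ZFC⁻ and `π : M → N` elementary.
Suppose `α` is an ordinal of `M` such that `sup π"α = α` and `π` is continuous at `cof^M(α)`.
Then `π(α) = α`. -/
theorem fixed_point_lemma (M N : ZFSet)
    (hM : ModelsZFCminus M.toSet) (hN : ModelsZFCminus N.toSet)
    (π : ZFSet → ZFSet) (hπ : IsElem M.toSet N.toSet π)
    (α : ZFSet) (hαM : α ∈ M) (hα : α.IsOrdinal)
    (hsup : IsSupOf α {y | ∃ β ∈ α, y = π β})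
    (hcont : ∀ γ, IsCofOf M.toSet α γ → IsSupOf (π γ) {y | ∃ β ∈ γ, y = π β}) :
    π α = α := by
  have hTM : IsTransClass M.toSet := hM.1
  have hTN : IsTransClass N.toSet := hN.1
  have hαM' : α ∈ M.toSet := hαM
  have hmem : ∀ x ∈ M.toSet, ∀ y ∈ M.toSet, x ∈ y → π x ∈ π y := by
    intro x hx y hy h
    have hd : FDef 2 (fun v => v 0 ∈ v 1) := FDef.mem (FVar.proj 0) (FVar.proj 1)
    refine (hd.transfer hTM hTN hπ ![x, y] ?_).1 h
    intro i
    fin_cases i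
    · exact hx
    · exact hy
  have hord : ∀ x ∈ M.toSet, x.IsOrdinal → (π x).IsOrdinal := by
    intro x hx h
    have hd : FDef 1 (fun v => (v 0).IsOrdinal) := FDef.ordinal (FVar.proj 0)
    refine (hd.transfer hTM hTN hπ ![x] ?_).1 h
    intro i
    fin_cases i
    exact hx
  have hπα := hord α hαM' hα
  obtain ⟨γ, hγ⟩ := existsCof hM hαM' hα
  have hsupγ := hcont γ hγ
  obtain ⟨f, hfM, hf⟩ := hγ.2.2.1
  have hγM := hγ.1
  have hcof : ∀ ξ ∈ π α, ∃ η ∈ π γ, ∃ ζ ∈ π α, ZFSet.pair η ζ ∈ π f ∧ (ξ ∈ ζ ∨ ξ = ζ) := by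
    have hd : FDef 3 (fun v => ∀ ξ ∈ v 0, ∃ η ∈ v 1, ∃ ζ ∈ v 0,
        ZFSet.pair η ζ ∈ v 2 ∧ (ξ ∈ ζ ∨ ξ = ζ)) := by
      refine FDef.ball (Q := fun v ξ => ∃ η ∈ v 1, ∃ ζ ∈ v 0,
        ZFSet.pair η ζ ∈ v 2 ∧ (ξ ∈ ζ ∨ ξ = ζ)) (FVar.proj 0) ?_
      refine FDef.bex (Q := fun v η => ∃ ζ ∈ v 0,
        ZFSet.pair η ζ ∈ v 2 ∧ (v 3 ∈ ζ ∨ v 3 = ζ)) (FVar.proj 1) ?_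
      refine FDef.bex (Q := fun v ζ =>
        ZFSet.pair (v 4) ζ ∈ v 2 ∧ (v 3 ∈ ζ ∨ v 3 = ζ)) (FVar.proj 0) ?_
      exact (FDef.pairMem (FVar.proj 2) (FVar.proj 4) (FVar.proj 5)).and
        ((FDef.mem (FVar.proj 3) (FVar.proj 5)).or (FDef.eq (FVar.proj 3) (FVar.proj 5)))
    refine (hd.transfer hTM hTN hπ ![α, γ, f] ?_).1 ?_
    · intro i
      fin_cases i
      · exact hαM'
      · exact hγM
      · exact hfM
    · intro ξ hξ
      obtain ⟨η, hη, ζ, hp, h⟩ := hf.2 ξ hξ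
      exact ⟨η, hη, ζ, (ZFSet.pair_mem_prod.1 (hf.1.1 hp)).2, hp, h⟩
  have hbd : ∀ β ∈ γ, ∀ δ ∈ α, (∀ η ∈ β, ∀ ζ ∈ α, ZFSet.pair η ζ ∈ f → ζ ∈ δ) →
      ∀ η ∈ π β, ∀ ζ ∈ π α, ZFSet.pair η ζ ∈ π f → ζ ∈ π δ := by
    intro β hβ δ hδ h
    have hd : FDef 4 (fun v => ∀ η ∈ v 0, ∀ ζ ∈ v 1, ZFSet.pair η ζ ∈ v 2 → ζ ∈ v 3) := by
      refine FDef.ball (Q := fun v η => ∀ ζ ∈ v 1, ZFSet.pair η ζ ∈ v 2 → ζ ∈ v 3)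
        (FVar.proj 0) ?_
      refine FDef.ball (Q := fun v ζ => ZFSet.pair (v 4) ζ ∈ v 2 → ζ ∈ v 3)
        (FVar.proj 1) ?_
      exact (FDef.pairMem (FVar.proj 2) (FVar.proj 4) (FVar.proj 5)).imp
        (FDef.mem (FVar.proj 5) (FVar.proj 3))
    refine (hd.transfer hTM hTN hπ ![β, α, f, δ] ?_).1 h
    intro i
    fin_cases i
    · exact hTM _ hγM _ hβ
    · exact hαM'
    · exact hfM
    · exact hTM _ hαM' _ hδ
  have hle : α ⊆ π α := by
    refine hsup.2.2 _ hπα ?_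
    rintro _ ⟨β, hβ, rfl⟩
    exact hπα.subset_of_mem (hmem β (hTM _ hαM' _ hβ) α hαM' hβ)
  have hge : π α ⊆ α := by
    intro ξ hξ
    obtain ⟨η, hη, ζ, hζ, hp, hξζ⟩ := hcof ξ hξ
    have hex : ∃ β ∈ γ, η ∈ π β := by
      by_contra! hno
      have hηo : η.IsOrdinal := hsupγ.1.mem hη
      have hsub : π γ ⊆ η := by
        refine hsupγ.2.2 η hηo ?_
        rintro _ ⟨β, hβ, rfl⟩
        exact (ZFSet.IsOrdinal.notMem_iff_subset hηo
          (hord β (hTM _ hγM _ hβ) (hγ.2.1.mem hβ))).1 (hno β hβ)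
      exact ZFSet.mem_irrefl η (hsub hη)
    obtain ⟨β, hβ, hηβ⟩ := hex
    obtain ⟨δ, hδ, hδ'⟩ := bddBelow hM hα hαM' hγ hfM hf hβ
    have hζδ := hbd β hβ δ hδ hδ' η hηβ ζ hζ hp
    have hζα : ζ ∈ α := hsup.2.1 (π δ) ⟨δ, hδ, rfl⟩ hζδ
    rcases hξζ with h | h
    · exact hα.mem_trans h hζα
    · rw [h]; exact hζα
  ext z
  exact ⟨fun h => hge h, fun h => hle h⟩
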